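/- Let Γ be a finite extensive-form game with perfect recall. A behavioral strategy profile β* is a Nash equilibrium in behavioral strategies if and only if there exist a behavioral strategy profile β̃*, a belief system μ*, and multipliers λ*, λ̃*, ζ*, ζ̃* such that (β*, β̃*, μ*, λ*, λ̃*, ζ*, ζ̃*) solves the system: u^i((a, ϱ^i_{I_i^j}(β^{-I_i^j}, β̃)) ∧ I_i^j) + λ^i_{I_i^j}(a) − ζ^i_{I_i^j} = 0 and u^i(a, ϱ^i_{I_i^j}(β^{-I_i^j}, β̃), μ | I_i^j) + λ̃^i_{I_i^j}(a) − ζ̃^i_{I_i^j} = 0 for all i ∈ N, j ∈ M_i, a ∈ A(I_i^j); S^i(I_i^j|β) μ^i_{I_i^j}(h) = S^i(h|β) and μ^i_{I_i^j}(h) ≥ 0 for all i, j, h ∈ I_i^j; Σ_{h ∈ I_i^j} μ^i_{I_i^j}(h) = 1, Σ_{a ∈ A(I_i^j)} β^i_{I_i^j}(a) = 1, Σ_{a ∈ A(I_i^j)} β̃^i_{I_i^j}(a) = 1 for all i, j; β^i_{I_i^j}(a) λ^i_{I_i^j}(a) = 0, β̃^i_{I_i^j}(a) λ̃^i_{I_i^j}(a)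 = 0, and β^i_{I_i^j}(a) ≥ 0, λ^i_{I_i^j}(a) ≥ 0, β̃^i_{I_i^j}(a) ≥ 0, λ̃^i_{I_i^j}(a) ≥ 0 for all i, j, a ∈ A(I_i^j). -/

import Mathlib

open scoped Classical

noncomputable section

/-- A finite extensive-form game.  Actions are labelled by natural numbers drawn from the
finite pool `actFinset`; a history is the list of actions taken so far; players are `Fin n`
and `P h = none` means that the chance player moves after `h`.  The information sets of
player `i` are `Info i j` for `j < m i`, and `infoIdx h` is the index of the information
set containing a nonterminal history `h` at which some player moves.  Payoffs `u i h` are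
relevant on terminal histories. -/
structure EFG where
  n : ℕ
  actFinset : Finset ℕ
  H : Finset (List ℕ)
  P : List ℕ → Option (Fin n)
  fc : List ℕ → ℕ → ℝ
  m : Fin n → ℕ
  Info : Fin n → ℕ → Finset (List ℕ)
  infoIdx : List ℕ → ℕ
  u : Fin n → List ℕ → ℝ
  empty_mem : ([] : List ℕ) ∈ H
  prefixClosed : ∀ h ∈ H, ∀ h' : List ℕ, h' <+: h → h' ∈ H
  act_mem : ∀ (h : List ℕ) (a : ℕ), h ++ [a] ∈ H → a ∈ actFinset
  fc_nonneg : ∀ h a, 0 ≤ fc h a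
  fc_sum : ∀ h ∈ H, P h = none → (∃ a, h ++ [a] ∈ H) →
    ∑ a ∈ actFinset.filter (fun a => h ++ [a] ∈ H), fc h a = 1
  info_spec : ∀ (i : Fin n) (j : ℕ) (h : List ℕ), j < m i →
    (h ∈ Info i j ↔ h ∈ H ∧ P h = some i ∧ (∃ a, h ++ [a] ∈ H) ∧ infoIdx h = j)
  infoIdx_lt : ∀ (i : Fin n), ∀ h ∈ H, P h = some i → (∃ a, h ++ [a] ∈ H) → infoIdx h < m i
  info_nonempty : ∀ (i : Fin n) (j : ℕ), j < m i → (Info i j).Nonempty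
  info_actions : ∀ (i : Fin n) (j : ℕ), j < m i → ∀ h ∈ Info i j, ∀ h' ∈ Info i j,
    ∀ a : ℕ, (h ++ [a] ∈ H ↔ h' ++ [a] ∈ H)
  act_unique : ∀ (h h' : List ℕ) (a : ℕ), h ∈ H → h' ∈ H → h ++ [a] ∈ H → h' ++ [a] ∈ H →
    P h = P h' ∧ infoIdx h = infoIdx h'

namespace EFG

/-- Behavioral strategy profiles (player, information-set index, action ↦ probability). -/
abbrev Profile (G : EFG) : Type := Fin G.n → ℕ → ℕ → ℝ

/-- Belief systems (player, information-set index, history ↦ probability). -/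
abbrev Belief (G : EFG) : Type := Fin G.n → ℕ → List ℕ → ℝ

variable (G : EFG)

/-- The set `Z` of terminal histories. -/
def Zset : Finset (List ℕ) := G.H.filter fun h => ∀ a : ℕ, h ++ [a] ∉ G.H

/-- The set `A(h)` of actions available after a history. -/
def A (h : List ℕ) : Finset ℕ := G.actFinset.filter fun a => h ++ [a] ∈ G.H

/-- The common action set `A(I_i^j)` of an information set. -/
def infoA (i : Fin G.n) (j : ℕ) : Finset ℕ := (G.Info i j).sup fun h => G.A h

/-- A behavioral strategy of player `i`: a probability distribution on `A(I_i^j)` for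
each information set `I_i^j`. -/
def IsBehStrategy (i : Fin G.n) (b : ℕ → ℕ → ℝ) : Prop :=
  ∀ j < G.m i, (∀ a ∈ G.infoA i j, 0 ≤ b j a) ∧ ∑ a ∈ G.infoA i j, b j a = 1

/-- A behavioral strategy profile. -/
def IsBehProfile (β : G.Profile) : Prop := ∀ i : Fin G.n, G.IsBehStrategy i (β i)

/-- The probability of action `a` at history `h`: the chance distribution if the chance
player moves, and the mover's behavioral strategy otherwise. -/
def moveProb (β : G.Profile) (h : List ℕ) (a : ℕ) : ℝ :=
  (G.P h).elim (G.fc h a) fun i => β i (G.infoIdx h) a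

/-- Player `i`'s record `X_i` of the information sets he encounters along a history and the
actions he takes at them, accumulated starting from the prefix `pre`. -/
def recordFrom (i : Fin G.n) : List ℕ → List ℕ → List (ℕ × ℕ)
  | _, [] => []
  | pre, b :: rest =>
    (if G.P pre = some i then [(G.infoIdx pre, b)] else []) ++ recordFrom i (pre ++ [b]) rest

/-- Perfect recall. -/
def PerfectRecall : Prop :=
  ∀ (i : Fin G.n) (j : ℕ), j < G.m i →
    ∀ h ∈ G.Info i j, ∀ h' ∈ G.Info i j, G.recordFrom i [] h = G.recordFrom i [] h'

/-- Product of the move probabilities along `rest`, continuing from the prefix `pre`. -/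
def prodAlong (β : G.Profile) : List ℕ → List ℕ → ℝ
  | _, [] => 1
  | pre, b :: rest => G.moveProb β pre b * prodAlong β (pre ++ [b]) rest

/-- `ω(h|β)`: the probability that the moves along `h` are played under `β`. -/
def omega (β : G.Profile) (h : List ℕ) : ℝ := G.prodAlong β [] h

/-- `ω(I_i^j|β)`. -/
def omegaInfo (i : Fin G.n) (j : ℕ) (β : G.Profile) : ℝ := ∑ h ∈ G.Info i j, G.omega β h

/-- Product of the move probabilities along `rest` from `pre`, disregarding player `i`'s
own moves. -/
def prodAlongNot (i : Fin G.n) (β : G.Profile) : List ℕ → List ℕ → ℝ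
  | _, [] => 1
  | pre, b :: rest =>
    (if G.P pre = some i then 1 else G.moveProb β pre b) * prodAlongNot i β (pre ++ [b]) rest

/-- `S^i(h|β)`: probability of the moves along `h`, disregarding player `i`'s own moves. -/
def Sh (i : Fin G.n) (β : G.Profile) (h : List ℕ) : ℝ := G.prodAlongNot i β [] h

/-- `S^i(I_i^j|β)`. -/
def SInfo (i : Fin G.n) (j : ℕ) (β : G.Profile) : ℝ := ∑ h ∈ G.Info i j, G.Sh i β h

/-- Product of the move probabilities along `rest` from `pre`, with the factor at prefixes
lying in `I_i^j` omitted. -/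
def prodAlongSkip (i : Fin G.n) (j : ℕ) (β : G.Profile) : List ℕ → List ℕ → ℝ
  | _, [] => 1
  | pre, b :: rest =>
    (if pre ∈ G.Info i j then 1 else G.moveProb β pre b) * prodAlongSkip i j β (pre ++ [b]) rest

/-- `q ∈ M(a, I_i^j)`: `I_i^q` is a first information set of player `i` after action `a`
(every history in `I_i^q` contains `a`, with no later action of `a` lying in any action set
of player `i`). -/
def FirstAfter (i : Fin G.n) (a : ℕ) (q : ℕ) : Prop :=
  q < G.m i ∧ ∀ h ∈ G.Info i q, ∃ l₁ l₂ : List ℕ,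
    h = l₁ ++ a :: l₂ ∧ ∀ b ∈ l₂, ∀ p < G.m i, b ∉ G.infoA i p

/-- `q ∈ M(I_i^j) = ∪_{a ∈ A(I_i^j)} M(a, I_i^j)`. -/
def MInfo (i : Fin G.n) (j : ℕ) (q : ℕ) : Prop := ∃ a ∈ G.infoA i j, G.FirstAfter i a q

/-- `q ∈ Λ(a, I_i^j)`: every history in `I_i^q` contains the action `a`. -/
def LambdaSet (i : Fin G.n) (a : ℕ) (q : ℕ) : Prop :=
  q < G.m i ∧ ∀ h ∈ G.Info i q, ∃ l₁ l₂ : List ℕ, h = l₁ ++ a :: l₂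

/-- `ϱ^i_{I_i^j}(β, β̃)`: replace player `i`'s component of `β` by that of `β̃` at every
information set `I_i^q` such that some history in `I_i^q` contains an action of `A(I_i^j)`. -/
def rho (i : Fin G.n) (j : ℕ) (β βt : G.Profile) : G.Profile := fun p q =>
  if p = i ∧ ∃ h ∈ G.Info i q, ∃ b ∈ h, b ∈ G.infoA i j then βt i q else β p q

/-- A belief system: a probability distribution on each information set. -/
def IsBelief (μ : G.Belief) : Prop :=
  ∀ (i : Fin G.n) (j : ℕ), j < G.m i →
    (∀ h ∈ G.Info i j, 0 ≤ μ i j h) ∧ ∑ h ∈ G.Info i j, μ i j h = 1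

/-- A self-independent belief system for `β`:
`S^i(I_i^j|β) · μ^i_{I_i^j}(h) = S^i(h|β)`. -/
def SelfIndep (β : G.Profile) (μ : G.Belief) : Prop :=
  ∀ (i : Fin G.n) (j : ℕ), j < G.m i → ∀ h ∈ G.Info i j,
    G.SInfo i j β * μ i j h = G.Sh i β h

/-- Auxiliary for `ν`: scan `rest` from `pre` for the subhistory lying in `I_i^j`, then
weight by the belief and multiply the move probabilities of the remaining moves (the move
taken at the subhistory itself being skipped). -/
def nuAux (i : Fin G.n) (j : ℕ) (β : G.Profile) (w : List ℕ → ℝ) : List ℕ → List ℕ → ℝ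
  | _, [] => 0
  | pre, b :: rest =>
    if pre ∈ G.Info i j then w pre * G.prodAlong β (pre ++ [b]) rest
    else nuAux i j β w (pre ++ [b]) rest

/-- `ν^i_{I_i^j}(h | a, β^{-I_i^j}, μ)` (it does not involve the component of `β` at
`I_i^j`). -/
def nu (i : Fin G.n) (j : ℕ) (β : G.Profile) (μ : G.Belief) (h : List ℕ) : ℝ :=
  G.nuAux i j β (μ i j) [] h

/-- `u^i((a, β^{-I_i^j}) ∧ I_i^j)`. -/
def uWedgeAct (i : Fin G.n) (j : ℕ) (a : ℕ) (β : G.Profile) : ℝ :=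
  ∑ h ∈ G.Zset.filter (fun h => a ∈ h), G.u i h * G.prodAlongSkip i j β [] h

/-- `u^i(β ∧ I_i^j)`. -/
def uWedge (i : Fin G.n) (j : ℕ) (β : G.Profile) : ℝ :=
  ∑ h ∈ G.Zset.filter (fun h => ∃ b ∈ h, b ∈ G.infoA i j), G.u i h * G.omega β h

/-- The conditional expected payoff `u^i(a, β^{-I_i^j}, μ | I_i^j)`. -/
def uCond (i : Fin G.n) (j : ℕ) (a : ℕ) (β : G.Profile) (μ : G.Belief) : ℝ :=
  ∑ h ∈ G.Zset.filter (fun h => a ∈ h), G.u i h * G.nu i j β μ h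

/-- The expected payoff `u^i(β)`. -/
def uExp (i : Fin G.n) (β : G.Profile) : ℝ := ∑ h ∈ G.Zset, G.u i h * G.omega β h

/-- The profile obtained from `β` by replacing all of player `i`'s components by `b`. -/
def replace (β : G.Profile) (i : Fin G.n) (b : ℕ → ℕ → ℝ) : G.Profile :=
  fun p => if p = i then b else β p

/-- `β` is a Nash equilibrium in behavioral strategies. -/
def IsNash (β : G.Profile) : Prop :=
  G.IsBehProfile β ∧ ∀ (i : Fin G.n) (b : ℕ → ℕ → ℝ), G.IsBehStrategy i b →
    G.uExp i (G.replace β i b) ≤ G.uExp i β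

/-- `(β, β̃, μ)` satisfies the Nash characterization (Definition 2 of the paper). -/
def NashChar (β βt : G.Profile) (μ : G.Belief) : Prop :=
  (∀ (i : Fin G.n) (j : ℕ), j < G.m i → ∀ a' ∈ G.infoA i j, ∀ a'' ∈ G.infoA i j,
    G.uWedgeAct i j a' (G.rho i j β βt) < G.uWedgeAct i j a'' (G.rho i j β βt) →
    β i j a' = 0) ∧
  (∀ (i : Fin G.n) (j : ℕ), j < G.m i → ∀ a' ∈ G.infoA i j, ∀ a'' ∈ G.infoA i j,
    G.uCond i j a' (G.rho i j β βt) μ < G.uCond i j a'' (G.rho i j β βt) μ →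
    βt i j a' = 0) ∧
  G.IsBelief μ ∧ G.SelfIndep β μ

/-- `r` is the root of a subgame: every information set lies entirely inside or entirely
outside the set of histories extending `r`. -/
def IsSubgameRoot (r : List ℕ) : Prop :=
  r ∈ G.H ∧ ∀ (i : Fin G.n) (j : ℕ), j < G.m i →
    (∀ h ∈ G.Info i j, r <+: h) ∨ ∀ h ∈ G.Info i j, ¬ r <+: h

/-- The depth `g` of the smallest subgame containing `A(I_i^j)` (the length of the longest
subgame root preceding every history of `I_i^j`). -/
def sgDepthInfo (i : Fin G.n) (j : ℕ) : ℕ :=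
  (G.H.filter fun r => G.IsSubgameRoot r ∧ ∀ h ∈ G.Info i j, r <+: h).sup List.length

/-- The depth `q(h)` of the smallest subgame containing the last action of `h`. -/
def sgDepthHist (h : List ℕ) : ℕ :=
  (G.H.filter fun r => G.IsSubgameRoot r ∧ r <+: h.dropLast).sup List.length

/-- `C^i_{I_i^j}(h|β)`: product of move probabilities along `h` within the smallest subgame
containing `A(I_i^j)`. -/
def Ch (i : Fin G.n) (j : ℕ) (β : G.Profile) (h : List ℕ) : ℝ :=
  G.prodAlong β (h.take (G.sgDepthInfo i j)) (h.drop (G.sgDepthInfo i j))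

/-- `C^i_{I_i^j}(I_i^j|β)`. -/
def CInfo (i : Fin G.n) (j : ℕ) (β : G.Profile) : ℝ := ∑ h ∈ G.Info i j, G.Ch i j β h

/-- `u^i((a, β^{-I_i^j}) ⋄ I_i^j)`. -/
def uDiamondAct (i : Fin G.n) (j : ℕ) (a : ℕ) (β : G.Profile) : ℝ :=
  ∑ h ∈ G.Zset.filter (fun h => a ∈ h), G.u i h *
    G.prodAlongSkip i j β (h.take (G.sgDepthInfo i j)) (h.drop (G.sgDepthInfo i j))

/-- `Y^i(h|β)`: like `S^i(h|β)` but within the smallest subgame containing the last action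
of `h`. -/
def Yh (i : Fin G.n) (β : G.Profile) (h : List ℕ) : ℝ :=
  G.prodAlongNot i β (h.take (G.sgDepthHist h)) (h.drop (G.sgDepthHist h))

/-- `Y^i(I_i^j|β)`. -/
def YInfo (i : Fin G.n) (j : ℕ) (β : G.Profile) : ℝ := ∑ h ∈ G.Info i j, G.Yh i β h

/-- The belief condition `Y^i(I_i^j|β) · μ^i_{I_i^j}(h) = Y^i(h|β)`. -/
def YConsistent (β : G.Profile) (μ : G.Belief) : Prop :=
  ∀ (i : Fin G.n) (j : ℕ), j < G.m i → ∀ h ∈ G.Info i j,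
    G.YInfo i j β * μ i j h = G.Yh i β h

/-- The expected payoff of player `i` in the subgame rooted at `r` (payoffs of terminal
histories extending `r`, weighted by the move probabilities within the subgame). -/
def uExpFrom (i : Fin G.n) (β : G.Profile) (r : List ℕ) : ℝ :=
  ∑ h ∈ G.Zset.filter (fun h => r <+: h), G.u i h * G.prodAlong β r (h.drop r.length)

/-- `β` is a subgame perfect equilibrium in behavioral strategies: its restriction to every
subgame is a Nash equilibrium in behavioral strategies of that subgame. -/
def IsSubgamePerfect (β : G.Profile) : Prop :=
  G.IsBehProfile β ∧ ∀ r : List ℕ, G.IsSubgameRoot r →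
    ∀ (i : Fin G.n) (b : ℕ → ℕ → ℝ), G.IsBehStrategy i b →
      G.uExpFrom i (G.replace β i b) r ≤ G.uExpFrom i β r

/-- `(β, β̃, μ)` satisfies the subgame perfect characterization (Definition 6 of the
paper). -/
def SubgameChar (β βt : G.Profile) (μ : G.Belief) : Prop :=
  (∀ (i : Fin G.n) (j : ℕ), j < G.m i → ∀ a' ∈ G.infoA i j, ∀ a'' ∈ G.infoA i j,
    G.uDiamondAct i j a' (G.rho i j β βt) < G.uDiamondAct i j a'' (G.rho i j β βt) →
    β i j a' = 0) ∧
  (∀ (i : Fin G.n) (j : ℕ), j < G.m i → ∀ a' ∈ G.infoA i j, ∀ a'' ∈ G.infoA i j,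
    G.uCond i j a' (G.rho i j β βt) μ < G.uCond i j a'' (G.rho i j β βt) μ →
    βt i j a' = 0) ∧
  G.IsBelief μ ∧ G.YConsistent β μ

/-- `(β, μ)` is a semi-sequential equilibrium. -/
def SemiSeqEq (β : G.Profile) (μ : G.Belief) : Prop :=
  G.IsBehProfile β ∧ G.IsBelief μ ∧ G.SelfIndep β μ ∧
  ∀ (i : Fin G.n) (j : ℕ), j < G.m i → ∀ a' ∈ G.infoA i j, ∀ a'' ∈ G.infoA i j,
    G.uCond i j a' β μ < G.uCond i j a'' β μ → β i j a' = 0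

/-- `(β, μ)` is a subgame perfect semi-sequential equilibrium. -/
def SubgameSemiSeqEq (β : G.Profile) (μ : G.Belief) : Prop :=
  G.IsBehProfile β ∧ G.IsBelief μ ∧ G.YConsistent β μ ∧
  ∀ (i : Fin G.n) (j : ℕ), j < G.m i → ∀ a' ∈ G.infoA i j, ∀ a'' ∈ G.infoA i j,
    G.uCond i j a' β μ < G.uCond i j a'' β μ → β i j a' = 0

/-- `d(I_i^j)`: the number of information sets of player `i` containing a prefix of some
history of `I_i^j` (counting `I_i^j` itself). -/
def dInfo (i : Fin G.n) (j : ℕ) : ℕ :=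
  ((Finset.range (G.m i)).filter
    (fun q => ∃ h ∈ G.Info i j, ∃ p : List ℕ, p <+: h ∧ p ∈ G.Info i q)).card

end EFG

/-!
Write `v(p)` for the payoff expected from a history `p` onwards. Summing the one-step recursions of
`v` for two profiles over all histories, weighted by the probability of reaching them, shows that
the payoffs of two strategies `b` and `b̃` of player `i` differ by the sum over the information
sets of `i` of the probability that `b` reaches them times the gain from moving once according to
`b` instead of `b̃` and continuing with `b̃`. Hence a strategy `β̃ⁱ` that is optimal, given the
beliefs, at every information set is a best reply, and `βⁱ` is as good exactly when it is optimal
at every information set it reaches. The latter is the condition on `u ∧ I`, because under perfect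
recall `ω(h|β) = ω(I|β) μ(h)`. Such a `β̃ⁱ` exists by backward induction, and the multipliers
merely record that a distribution is supported on the maximizers.
-/

section Distribution

variable {α : Type*} {s : Finset α} {p v : α → ℝ}

theorem sum_mul_le_of_forall_le {c : ℝ} (hp : ∀ a ∈ s, 0 ≤ p a) (hp₁ : ∑ a ∈ s, p a = 1)
    (hv : ∀ a ∈ s, v a ≤ c) : ∑ a ∈ s, p a * v a ≤ c :=
  calc
    ∑ a ∈ s, p a * v a ≤ ∑ a ∈ s, p a * c :=
      Finset.sum_le_sum fun a ha => mul_le_mul_of_nonneg_left (hv a ha) (hp a ha)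
    _ = c := by rw [← Finset.sum_mul, hp₁, one_mul]

/-- The distribution `p` on `s` maximizes the expectation of `v`; only the point masses have to be
tested. -/
def MaximizesExpectation (s : Finset α) (p v : α → ℝ) : Prop :=
  ∀ a ∈ s, v a ≤ ∑ c ∈ s, p c * v c

theorem maximizesExpectation_congr {w : α → ℝ} (hvw : ∀ a ∈ s, v a = w a) :
    MaximizesExpectation s p v ↔ MaximizesExpectation s p w := by
  have hsum : ∑ c ∈ s, p c * v c = ∑ c ∈ s, p c * w c :=
    Finset.sum_congr rfl fun c hc => by rw [hvw c hc]
  exact forall₂_congr fun a ha => by rw [hvw a ha, hsum]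

theorem MaximizesExpectation.mul_sub_eq_zero (hv : MaximizesExpectation s p v)
    (hp : ∀ a ∈ s, 0 ≤ p a) (hp₁ : ∑ a ∈ s, p a = 1) {a : α} (ha : a ∈ s) :
    p a * (∑ c ∈ s, p c * v c - v a) = 0 := by
  have hsum : ∑ b ∈ s, p b * (∑ c ∈ s, p c * v c - v b) = 0 := by
    simp only [mul_sub, Finset.sum_sub_distrib, ← Finset.sum_mul, hp₁, one_mul, sub_self]
  exact (Finset.sum_eq_zero_iff_of_nonneg fun b hb =>
    mul_nonneg (hp b hb) (sub_nonneg.2 (hv b hb))).1 hsum a ha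

theorem maximizesExpectation_of_multipliers {l : α → ℝ} {z : ℝ} (hp₁ : ∑ a ∈ s, p a = 1)
    (hv : ∀ a ∈ s, v a + l a - z = 0) (hl : ∀ a ∈ s, 0 ≤ l a) (hpl : ∀ a ∈ s, p a * l a = 0) :
    MaximizesExpectation s p v := by
  have hz : ∑ c ∈ s, p c * v c = z :=
    calc
      ∑ c ∈ s, p c * v c = ∑ c ∈ s, p c * z :=
        Finset.sum_congr rfl fun c hc => by linear_combination p c * hv c hc - hpl c hc
      _ = z := by rw [← Finset.sum_mul, hp₁, one_mul]
  intro a ha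
  linarith [hv a ha, hl a ha]

theorem MaximizesExpectation.mul_sum_sub_nonneg_iff {q : α → ℝ} {r : ℝ}
    (hv : MaximizesExpectation s q v) (hq : ∀ a ∈ s, 0 ≤ q a) (hq₁ : ∑ a ∈ s, q a = 1)
    (hr : 0 ≤ r) :
    0 ≤ r * ∑ a ∈ s, (p a - q a) * v a ↔ MaximizesExpectation s p fun a => r * v a := by
  have hdiff : r * ∑ a ∈ s, (p a - q a) * v a =
      ∑ a ∈ s, p a * (r * v a) - ∑ a ∈ s, q a * (r * v a) := by
    simp only [sub_mul, Finset.sum_sub_distrib, mul_sub, Finset.mul_sum, mul_left_comm]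
  rw [hdiff, sub_nonneg]
  refine ⟨fun h a ha => ?_, fun h => sum_mul_le_of_forall_le hq hq₁ h⟩
  calc
    r * v a ≤ r * ∑ c ∈ s, q c * v c := mul_le_mul_of_nonneg_left (hv a ha) hr
    _ = ∑ c ∈ s, q c * (r * v c) := by simp only [Finset.mul_sum, mul_left_comm]
    _ ≤ ∑ c ∈ s, p c * (r * v c) := h

theorem exists_distribution_maximizesExpectation (hs : s.Nonempty) (v : α → ℝ) :
    ∃ p : α → ℝ, (∀ a ∈ s, 0 ≤ p a) ∧ ∑ a ∈ s, p a = 1 ∧ MaximizesExpectation s p v := by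
  obtain ⟨m, hm, hmax⟩ := s.exists_max_image v hs
  have hnonneg : (0 : α → ℝ) ≤ Pi.single m 1 := Pi.single_nonneg.2 zero_le_one
  refine ⟨Pi.single m 1, fun a _ => hnonneg a, ?_, fun a ha => ?_⟩
  · rw [Finset.sum_pi_single', if_pos hm]
  · simpa [Pi.single_apply, hm] using hmax a ha

theorem exists_distribution_eq_const_mul (hs : s.Nonempty) (hv : ∀ a ∈ s, 0 ≤ v a) :
    ∃ p : α → ℝ, (∀ a ∈ s, 0 ≤ p a) ∧ ∑ a ∈ s, p a = 1 ∧
      ∀ a ∈ s, (∑ c ∈ s, v c) * p a = v a := by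
  rcases eq_or_ne (∑ c ∈ s, v c) 0 with h0 | h0
  · refine ⟨fun _ => (s.card : ℝ)⁻¹, fun _ _ => by positivity, ?_, fun a ha => ?_⟩
    · have := hs.card_pos
      rw [Finset.sum_const, nsmul_eq_mul, mul_inv_cancel₀ (by positivity)]
    · rw [h0, zero_mul, (Finset.sum_eq_zero_iff_of_nonneg hv).1 h0 a ha]
  · refine ⟨fun a => v a / ∑ c ∈ s, v c, fun a ha => div_nonneg (hv a ha) (Finset.sum_nonneg hv),
      ?_, fun a _ => mul_div_cancel₀ _ h0⟩
    rw [← Finset.sum_div, div_self h0]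

end Distribution

theorem exists_forall_apply_of_wellFounded {ι : Type*} {X : ι → Type*} [∀ j, Nonempty (X j)]
    {r : ι → ι → Prop} (hr : WellFounded r) {Q : (j : ι) → ((k : ι) → X k) → X j → Prop}
    (hloc : ∀ j b b', (∀ k, r k j → b k = b' k) → ∀ x, Q j b x → Q j b' x)
    (hex : ∀ j b, ∃ x, Q j b x) : ∃ b, ∀ j, Q j b (b j) := by
  choose f hf using hex
  let below (j : ι) (b : (k : ι) → r k j → X k) (k : ι) : X k :=
    if h : r k j then b k h else Classical.arbitrary (X k)
  let b : (j : ι) → X j := hr.fix fun j b => f j (below j b)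
  refine ⟨b, fun j => ?_⟩
  have hbj : b j = f j (below j fun k _ => b k) := hr.fix_eq _ j
  rw [hbj]
  exact hloc j _ b (fun k hk => dif_pos hk) _ (hf j _)

namespace EFG

variable {G : EFG} {i : Fin G.n} {j : ℕ} {β γ : G.Profile} {μ : G.Belief} {p h : List ℕ} {a : ℕ}

/-! ### Information sets and move probabilities -/

theorem mem_H_of_isPrefix (hh : h ∈ G.H) (hp : p <+: h) : p ∈ G.H :=
  G.prefixClosed h hh p hp

theorem mem_A : a ∈ G.A p ↔ p ++ [a] ∈ G.H := by
  simp only [A, Finset.mem_filter, and_iff_right_iff_imp]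
  exact G.act_mem p a

theorem mem_H_of_mem_Info (hj : j < G.m i) (hp : p ∈ G.Info i j) : p ∈ G.H :=
  ((G.info_spec i j p hj).1 hp).1

theorem P_of_mem_Info (hj : j < G.m i) (hp : p ∈ G.Info i j) : G.P p = some i :=
  ((G.info_spec i j p hj).1 hp).2.1

theorem infoIdx_of_mem_Info (hj : j < G.m i) (hp : p ∈ G.Info i j) : G.infoIdx p = j :=
  ((G.info_spec i j p hj).1 hp).2.2.2

theorem moveProb_of_P_eq (hP : G.P p = some i) (a : ℕ) :
    G.moveProb β p a = β i (G.infoIdx p) a := by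
  simp only [moveProb, hP, Option.elim_some]

theorem A_eq_infoA (hj : j < G.m i) (hp : p ∈ G.Info i j) : G.A p = G.infoA i j := by
  ext a
  simp only [infoA, Finset.mem_sup, mem_A]
  exact ⟨fun ha => ⟨p, hp, ha⟩, fun ⟨q, hq, ha⟩ => (G.info_actions i j hj q hq p hp a).1 ha⟩

theorem mem_infoA (hj : j < G.m i) (hp : p ∈ G.Info i j) : a ∈ G.infoA i j ↔ p ++ [a] ∈ G.H := by
  rw [← A_eq_infoA hj hp, mem_A]

theorem infoA_nonempty (hj : j < G.m i) : (G.infoA i j).Nonempty := by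
  obtain ⟨p, hp⟩ := G.info_nonempty i j hj
  obtain ⟨a, ha⟩ := ((G.info_spec i j p hj).1 hp).2.2.1
  exact ⟨a, (mem_infoA hj hp).2 ha⟩

theorem infoIdx_lt_of_P_eq (ha : p ++ [a] ∈ G.H) (hP : G.P p = some i) : G.infoIdx p < G.m i :=
  G.infoIdx_lt i p (mem_H_of_isPrefix ha (List.prefix_append _ _)) hP ⟨a, ha⟩

theorem mem_Info_of_P_eq (ha : p ++ [a] ∈ G.H) (hP : G.P p = some i) :
    p ∈ G.Info i (G.infoIdx p) :=
  (G.info_spec i _ p (infoIdx_lt_of_P_eq ha hP)).2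
    ⟨mem_H_of_isPrefix ha (List.prefix_append _ _), hP, ⟨a, ha⟩, rfl⟩

theorem mem_Info_of_mem_infoA (hj : j < G.m i) (ha : a ∈ G.infoA i j) (hpa : p ++ [a] ∈ G.H) :
    p ∈ G.Info i j := by
  obtain ⟨q, hq⟩ := G.info_nonempty i j hj
  have hp : p ∈ G.H := mem_H_of_isPrefix hpa (List.prefix_append _ _)
  obtain ⟨hP, hidx⟩ :=
    G.act_unique p q a hp (mem_H_of_mem_Info hj hq) hpa ((mem_infoA hj hq).1 ha)
  exact (G.info_spec i j p hj).2 ⟨hp, hP.trans (P_of_mem_Info hj hq), ⟨a, hpa⟩,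
    hidx.trans (infoIdx_of_mem_Info hj hq)⟩

theorem moveProb_nonneg (hβ : G.IsBehProfile β) (ha : p ++ [a] ∈ G.H) :
    0 ≤ G.moveProb β p a := by
  rcases hP : G.P p with _ | k
  · simpa only [moveProb, hP, Option.elim_none] using G.fc_nonneg p a
  · have hk := infoIdx_lt_of_P_eq ha hP
    rw [moveProb_of_P_eq hP]
    exact (hβ k _ hk).1 a ((mem_infoA hk (mem_Info_of_P_eq ha hP)).2 ha)

theorem prodAlong_append (β : G.Profile) (l₁ l₂ p : List ℕ) :
    G.prodAlong β p (l₁ ++ l₂) = G.prodAlong β p l₁ * G.prodAlong β (p ++ l₁) l₂ := by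
  induction l₁ generalizing p with
  | nil => simp [prodAlong]
  | cons b l ih => simp [prodAlong, ih, mul_assoc]

theorem prodAlong_congr {l : List ℕ}
    (hm : ∀ q c, p <+: q → q ++ [c] <+: p ++ l → G.moveProb β q c = G.moveProb γ q c) :
    G.prodAlong β p l = G.prodAlong γ p l := by
  induction l generalizing p with
  | nil => rfl
  | cons b l ih =>
    rw [prodAlong, prodAlong, hm p b (List.prefix_refl p) ⟨l, by simp⟩, ih fun q c hq hqc =>
      hm q c ((List.prefix_append p [b]).trans hq) (by simpa using hqc)]

theorem omega_append_singleton (β : G.Profile) (p : List ℕ) (a : ℕ) :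
    G.omega β (p ++ [a]) = G.omega β p * G.moveProb β p a := by
  simp [omega, prodAlong_append, prodAlong]

theorem omega_nonneg (hβ : G.IsBehProfile β) (hh : h ∈ G.H) : 0 ≤ G.omega β h := by
  induction h using List.reverseRecOn with
  | nil => exact zero_le_one
  | append_singleton p a ih =>
    rw [omega_append_singleton]
    exact mul_nonneg (ih (mem_H_of_isPrefix hh (List.prefix_append _ _))) (moveProb_nonneg hβ hh)

theorem omegaInfo_nonneg (hβ : G.IsBehProfile β) (hj : j < G.m i) : 0 ≤ G.omegaInfo i j β :=
  Finset.sum_nonneg fun _ hp => omega_nonneg hβ (mem_H_of_mem_Info hj hp)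

theorem prodAlongNot_append (β : G.Profile) (l₁ l₂ p : List ℕ) :
    G.prodAlongNot i β p (l₁ ++ l₂) =
      G.prodAlongNot i β p l₁ * G.prodAlongNot i β (p ++ l₁) l₂ := by
  induction l₁ generalizing p with
  | nil => simp [prodAlongNot]
  | cons b l ih => simp [prodAlongNot, ih, mul_assoc]

theorem Sh_append_singleton (β : G.Profile) (p : List ℕ) (a : ℕ) :
    G.Sh i β (p ++ [a]) = G.Sh i β p * if G.P p = some i then 1 else G.moveProb β p a := by
  simp [Sh, prodAlongNot_append, prodAlongNot]

theorem Sh_nonneg (hβ : G.IsBehProfile β) (hh : h ∈ G.H) : 0 ≤ G.Sh i β h := by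
  induction h using List.reverseRecOn with
  | nil => exact zero_le_one
  | append_singleton p a ih =>
    rw [Sh_append_singleton]
    refine mul_nonneg (ih (mem_H_of_isPrefix hh (List.prefix_append _ _))) ?_
    split_ifs
    exacts [zero_le_one, moveProb_nonneg hβ hh]

theorem exists_isBelief_selfIndep (hβ : G.IsBehProfile β) :
    ∃ μ : G.Belief, G.IsBelief μ ∧ G.SelfIndep β μ := by
  have hex (i : Fin G.n) (j : ℕ) : ∃ w : List ℕ → ℝ, j < G.m i →
      (∀ h ∈ G.Info i j, 0 ≤ w h) ∧ ∑ h ∈ G.Info i j, w h = 1 ∧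
        ∀ h ∈ G.Info i j, G.SInfo i j β * w h = G.Sh i β h := by
    by_cases hj : j < G.m i
    · obtain ⟨w, hw⟩ := exists_distribution_eq_const_mul (G.info_nonempty i j hj)
        fun h hh => Sh_nonneg (i := i) hβ (mem_H_of_mem_Info hj hh)
      exact ⟨w, fun _ => hw⟩
    · exact ⟨0, fun h => absurd h hj⟩
  choose μ hμ using hex
  exact ⟨μ, fun i j hj => ⟨(hμ i j hj).1, (hμ i j hj).2.1⟩, fun i j hj => (hμ i j hj).2.2⟩

/-! ### Perfect recall -/

/-- The probability that player `i` makes the moves listed in a record `X_i(h)` under the strategy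
`b`. -/
def recordProb (b : ℕ → ℕ → ℝ) (X : List (ℕ × ℕ)) : ℝ := (X.map fun x => b x.1 x.2).prod

theorem recordFrom_append (i : Fin G.n) (l₁ l₂ p : List ℕ) :
    G.recordFrom i p (l₁ ++ l₂) = G.recordFrom i p l₁ ++ G.recordFrom i (p ++ l₁) l₂ := by
  induction l₁ generalizing p with
  | nil => simp [recordFrom]
  | cons b l ih => simp [recordFrom, ih]

theorem omega_eq_recordProb_mul_Sh (i : Fin G.n) (β : G.Profile) (h : List ℕ) :
    G.omega β h = recordProb (β i) (G.recordFrom i [] h) * G.Sh i β h := by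
  induction h using List.reverseRecOn with
  | nil => simp [omega, prodAlong, recordProb, recordFrom, Sh, prodAlongNot]
  | append_singleton p a ih =>
    rw [omega_append_singleton, Sh_append_singleton, recordFrom_append, ih]
    by_cases hP : G.P p = some i
    · simp [recordProb, recordFrom, hP, moveProb_of_P_eq hP, mul_right_comm]
    · simp [recordProb, recordFrom, hP, mul_assoc]

theorem omega_eq_omegaInfo_mul (hPR : G.PerfectRecall) (hj : j < G.m i) {w : List ℕ → ℝ}
    (hw : ∀ h ∈ G.Info i j, G.SInfo i j β * w h = G.Sh i β h) (hh : h ∈ G.Info i j) :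
    G.omega β h = G.omegaInfo i j β * w h := by
  have hsum : G.omegaInfo i j β = recordProb (β i) (G.recordFrom i [] h) * G.SInfo i j β := by
    rw [omegaInfo, SInfo, Finset.mul_sum]
    refine Finset.sum_congr rfl fun h' hh' => ?_
    rw [omega_eq_recordProb_mul_Sh i, hPR i j hj h' hh' h hh]
  rw [hsum, mul_assoc, hw h hh, omega_eq_recordProb_mul_Sh i]

/-- The common number of moves of player `i` before the histories of `I_i^j`. The supremum only
serves to avoid choosing a representative; under perfect recall it is taken over a constant. -/
def infoRank (i : Fin G.n) (j : ℕ) : ℕ :=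
  (G.Info i j).sup fun h => (G.recordFrom i [] h).length

theorem length_recordFrom_eq_infoRank (hPR : G.PerfectRecall) (hj : j < G.m i)
    (hh : h ∈ G.Info i j) : (G.recordFrom i [] h).length = G.infoRank i j :=
  le_antisymm (Finset.le_sup (f := fun h => (G.recordFrom i [] h).length) hh)
    (Finset.sup_le fun h' hh' => (congrArg List.length (hPR i j hj h' hh' h hh)).le)

theorem infoRank_lt_of_isPrefix (hPR : G.PerfectRecall) {k : ℕ} (hj : j < G.m i) (hk : k < G.m i)
    (hp : p ∈ G.Info i j) (hh : h ∈ G.Info i k) (hph : p ++ [a] <+: h) :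
    G.infoRank i j < G.infoRank i k := by
  obtain ⟨l, rfl⟩ := hph
  rw [← length_recordFrom_eq_infoRank hPR hj hp, ← length_recordFrom_eq_infoRank hPR hk hh]
  simp only [recordFrom_append, recordFrom, List.nil_append, P_of_mem_Info hj hp, if_true,
    List.length_append, List.length_cons, List.append_nil, List.length_nil]
  omega

theorem infoRank_lt_of_mem (hPR : G.PerfectRecall) {k : ℕ} (hj : j < G.m i) (hk : k < G.m i)
    (ha : a ∈ G.infoA i j) (hh : h ∈ G.Info i k) (hah : a ∈ h) :
    G.infoRank i j < G.infoRank i k := by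
  obtain ⟨p, l, rfl⟩ := List.append_of_mem hah
  have hpa : p ++ [a] <+: p ++ a :: l := ⟨l, by simp⟩
  have hp := mem_Info_of_mem_infoA hj ha (mem_H_of_isPrefix (mem_H_of_mem_Info hk hh) hpa)
  exact infoRank_lt_of_isPrefix hPR hj hk hp hh hpa

theorem notMem_Info_of_isPrefix (hPR : G.PerfectRecall) (hj : j < G.m i) (hh : h ∈ G.Info i j)
    (hph : p ++ [a] <+: h) : p ∉ G.Info i j := fun hp =>
  (infoRank_lt_of_isPrefix hPR hj hj hp hh hph).false

theorem eq_of_isPrefix_of_mem_Info (hPR : G.PerfectRecall) (hj : j < G.m i) {q : List ℕ}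
    (hp : p ∈ G.Info i j) (hq : q ∈ G.Info i j) (hph : p <+: h) (hqh : q <+: h) : p = q := by
  wlog hlen : p.length ≤ q.length generalizing p q
  · exact (this hq hp hqh hph (le_of_not_ge hlen)).symm
  obtain ⟨_ | ⟨a, l⟩, rfl⟩ := List.prefix_of_prefix_length_le hph hqh hlen
  · rw [List.append_nil]
  · exact absurd hp (notMem_Info_of_isPrefix (a := a) hPR hj hq ⟨l, by simp⟩)

/-! ### Sums over histories -/

theorem sum_H_eq_add_sum_A (f : List ℕ → ℝ) :
    ∑ h ∈ G.H, f h = f [] + ∑ p ∈ G.H, ∑ a ∈ G.A p, f (p ++ [a]) := by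
  rw [← Finset.add_sum_erase _ _ G.empty_mem, Finset.sum_sigma']
  congr 1
  symm
  refine Finset.sum_nbij (fun x => x.1 ++ [x.2]) (fun x hx => ?_) ?_ (fun h hh => ?_)
    fun _ _ => rfl
  · exact Finset.mem_erase.2 ⟨by simp, mem_A.1 (Finset.mem_sigma.1 hx).2⟩
  · rintro ⟨p, a⟩ - ⟨q, b⟩ - hpq
    obtain ⟨rfl, hab⟩ := List.append_inj' hpq rfl
    simpa using hab
  · obtain ⟨hne, hh⟩ := Finset.mem_erase.1 hh
    obtain ⟨p, a, rfl⟩ := (List.eq_nil_or_concat' h).resolve_left hne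
    exact ⟨⟨p, a⟩, Finset.mem_sigma.2
      ⟨mem_H_of_isPrefix hh (List.prefix_append _ _), mem_A.2 hh⟩, rfl⟩

theorem sum_H_eq_sum_Info {f : List ℕ → ℝ}
    (hf : ∀ p ∈ G.H, (∀ j < G.m i, p ∉ G.Info i j) → f p = 0) :
    ∑ p ∈ G.H, f p = ∑ j ∈ Finset.range (G.m i), ∑ p ∈ G.Info i j, f p := by
  rw [← Finset.sum_biUnion]
  · symm
    refine Finset.sum_subset (fun p hp => ?_) fun p hp hnot => hf p hp fun j hj hpj => hnot ?_
    · obtain ⟨j, hj, hpj⟩ := Finset.mem_biUnion.1 hp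
      exact mem_H_of_mem_Info (Finset.mem_range.1 hj) hpj
    · exact Finset.mem_biUnion.2 ⟨j, Finset.mem_range.2 hj, hpj⟩
  · intro j hj k hk hjk
    refine Finset.disjoint_left.2 fun p hpj hpk => hjk ?_
    rw [← infoIdx_of_mem_Info (Finset.mem_range.1 hj) hpj,
      infoIdx_of_mem_Info (Finset.mem_range.1 hk) hpk]

theorem sum_Zset_prefix_eq_sum_A (hp : p ∉ G.Zset) (f : List ℕ → ℝ) :
    ∑ h ∈ G.Zset with p <+: h, f h = ∑ a ∈ G.A p, ∑ h ∈ G.Zset with p ++ [a] <+: h, f h := by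
  rw [← Finset.sum_biUnion]
  · refine Finset.sum_congr (Finset.ext fun h => ?_) fun _ _ => rfl
    simp only [Finset.mem_biUnion, Finset.mem_filter]
    refine ⟨fun ⟨hh, hph⟩ => ?_, fun ⟨a, _, hh, hph⟩ => ⟨hh, (List.prefix_append _ _).trans hph⟩⟩
    obtain ⟨_ | ⟨a, l⟩, rfl⟩ := hph
    · exact absurd (by simpa using hh) hp
    · have hpa : p ++ [a] <+: p ++ a :: l := ⟨l, by simp⟩
      exact ⟨a, mem_A.2 (mem_H_of_isPrefix (Finset.mem_filter.1 hh).1 hpa), hh, hpa⟩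
  · intro a _ b _ hab
    refine Finset.disjoint_left.2 fun h ha hb => hab ?_
    have := List.prefix_of_prefix_length_le (Finset.mem_filter.1 ha).2 (Finset.mem_filter.1 hb).2
      (by simp)
    simpa using this

theorem sum_Zset_mem_eq_sum_Info (hPR : G.PerfectRecall) (hj : j < G.m i) (ha : a ∈ G.infoA i j)
    (f : List ℕ → ℝ) :
    ∑ h ∈ G.Zset with a ∈ h, f h =
      ∑ p ∈ G.Info i j, ∑ h ∈ G.Zset with p ++ [a] <+: h, f h := by
  rw [← Finset.sum_biUnion]
  · refine Finset.sum_congr (Finset.ext fun h => ?_) fun _ _ => rfl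
    simp only [Finset.mem_biUnion, Finset.mem_filter]
    refine ⟨fun ⟨hh, hah⟩ => ?_, fun ⟨p, _, hh, hph⟩ => ⟨hh, hph.subset (by simp)⟩⟩
    obtain ⟨p, l, rfl⟩ := List.append_of_mem hah
    have hpa : p ++ [a] <+: p ++ a :: l := ⟨l, by simp⟩
    have hpaH : p ++ [a] ∈ G.H := mem_H_of_isPrefix (Finset.mem_filter.1 hh).1 hpa
    exact ⟨p, mem_Info_of_mem_infoA hj ha hpaH, hh, hpa⟩
  · intro p hp q hq hpq
    refine Finset.disjoint_left.2 fun h hph hqh => hpq ?_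
    exact eq_of_isPrefix_of_mem_Info hPR hj hp hq
      ((List.prefix_append p [a]).trans (Finset.mem_filter.1 hph).2)
      ((List.prefix_append q [a]).trans (Finset.mem_filter.1 hqh).2)

/-! ### Continuation payoffs -/

theorem uExpFrom_nil (β : G.Profile) : G.uExpFrom i β [] = G.uExp i β := by
  simp [uExpFrom, uExp, omega]

theorem uExpFrom_of_mem_Zset (β : G.Profile) (hp : p ∈ G.Zset) : G.uExpFrom i β p = G.u i p := by
  have hterm : {h ∈ G.Zset | p <+: h} = {p} := by
    refine Finset.eq_singleton_iff_unique_mem.2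
      ⟨Finset.mem_filter.2 ⟨hp, List.prefix_refl p⟩, fun h hh => ?_⟩
    obtain ⟨hh, _ | ⟨a, l⟩, rfl⟩ := Finset.mem_filter.1 hh
    · rw [List.append_nil]
    · exact absurd (mem_H_of_isPrefix (Finset.mem_filter.1 hh).1 ⟨l, by simp⟩)
        ((Finset.mem_filter.1 hp).2 a)
  rw [uExpFrom, hterm, Finset.sum_singleton, List.drop_length, prodAlong, mul_one]

theorem uExpFrom_eq_sum_A (β : G.Profile) (hp : p ∉ G.Zset) :
    G.uExpFrom i β p = ∑ a ∈ G.A p, G.moveProb β p a * G.uExpFrom i β (p ++ [a]) := by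
  rw [uExpFrom, sum_Zset_prefix_eq_sum_A hp]
  refine Finset.sum_congr rfl fun a _ => ?_
  rw [uExpFrom, Finset.mul_sum]
  refine Finset.sum_congr rfl fun h hh => ?_
  obtain ⟨l, rfl⟩ := (Finset.mem_filter.1 hh).2
  rw [List.drop_left, List.append_assoc, List.drop_left, List.singleton_append, prodAlong,
    mul_left_comm]

theorem uExpFrom_congr
    (hm : ∀ q c, p <+: q → q ++ [c] ∈ G.H → G.moveProb β q c = G.moveProb γ q c) :
    G.uExpFrom i β p = G.uExpFrom i γ p := by
  refine Finset.sum_congr rfl fun h hh => ?_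
  obtain ⟨hh, l, rfl⟩ := Finset.mem_filter.1 hh
  rw [List.drop_left, prodAlong_congr fun q c hq hqc =>
    hm q c hq (mem_H_of_isPrefix (Finset.mem_filter.1 hh).1 hqc)]

theorem uExp_sub_uExp (i : Fin G.n) (β γ : G.Profile) :
    G.uExp i β - G.uExp i γ = ∑ p ∈ G.H, G.omega β p *
      ∑ a ∈ G.A p, (G.moveProb β p a - G.moveProb γ p a) * G.uExpFrom i γ (p ++ [a]) := by
  let δ (p : List ℕ) : ℝ := G.uExpFrom i β p - G.uExpFrom i γ p
  have hstep (p : List ℕ) : δ p = ∑ a ∈ G.A p, G.moveProb β p a * δ (p ++ [a]) +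
      ∑ a ∈ G.A p, (G.moveProb β p a - G.moveProb γ p a) * G.uExpFrom i γ (p ++ [a]) := by
    by_cases hpZ : p ∈ G.Zset
    · have hA : G.A p = ∅ := Finset.eq_empty_of_forall_notMem fun a ha =>
        (Finset.mem_filter.1 hpZ).2 a (mem_A.1 ha)
      simp only [δ, uExpFrom_of_mem_Zset _ hpZ, hA, Finset.sum_empty, sub_self, add_zero]
    · simp only [δ, uExpFrom_eq_sum_A _ hpZ, ← Finset.sum_add_distrib, ← Finset.sum_sub_distrib]
      exact Finset.sum_congr rfl fun a _ => by ring
  have hsum : ∑ p ∈ G.H, G.omega β p * δ p =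
      ∑ p ∈ G.H, G.omega β p * ∑ a ∈ G.A p, G.moveProb β p a * δ (p ++ [a]) +
        ∑ p ∈ G.H, G.omega β p *
          ∑ a ∈ G.A p, (G.moveProb β p a - G.moveProb γ p a) * G.uExpFrom i γ (p ++ [a]) := by
    rw [← Finset.sum_add_distrib]
    exact Finset.sum_congr rfl fun p _ => by rw [hstep p, mul_add]
  have htel := sum_H_eq_add_sum_A (G := G) fun p => G.omega β p * δ p
  have hnil : G.omega β [] = 1 := rfl
  simp only [omega_append_singleton, mul_assoc, ← Finset.mul_sum, hnil, one_mul] at htel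
  rw [htel, add_comm] at hsum
  rw [← uExpFrom_nil, ← uExpFrom_nil]
  exact add_left_cancel hsum

theorem prodAlongSkip_append (β : G.Profile) (l₁ l₂ p : List ℕ) :
    G.prodAlongSkip i j β p (l₁ ++ l₂) =
      G.prodAlongSkip i j β p l₁ * G.prodAlongSkip i j β (p ++ l₁) l₂ := by
  induction l₁ generalizing p with
  | nil => simp [prodAlongSkip]
  | cons b l ih => simp [prodAlongSkip, ih, mul_assoc]

theorem prodAlongSkip_eq_prodAlong (β : G.Profile) {l : List ℕ}
    (hl : ∀ q c, p <+: q → q ++ [c] <+: p ++ l → q ∉ G.Info i j) :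
    G.prodAlongSkip i j β p l = G.prodAlong β p l := by
  induction l generalizing p with
  | nil => rfl
  | cons b l ih =>
    rw [prodAlongSkip, prodAlong, if_neg (hl p b (List.prefix_refl p) ⟨l, by simp⟩),
      ih fun q c hq hqc => hl q c ((List.prefix_append p [b]).trans hq) (by simpa using hqc)]

theorem nuAux_append_of_notMem (β : G.Profile) (w : List ℕ → ℝ) {l₁ : List ℕ} (l₂ : List ℕ)
    (hl : ∀ q c, p <+: q → q ++ [c] <+: p ++ l₁ → q ∉ G.Info i j) :
    G.nuAux i j β w p (l₁ ++ l₂) = G.nuAux i j β w (p ++ l₁) l₂ := by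
  induction l₁ generalizing p with
  | nil => simp
  | cons b l ih =>
    rw [List.cons_append, nuAux, if_neg (hl p b (List.prefix_refl p) ⟨l, by simp⟩),
      ih fun q c hq hqc => hl q c ((List.prefix_append p [b]).trans hq) (by simpa using hqc),
      List.append_assoc, List.singleton_append]

theorem prodAlongSkip_of_mem_Info (hPR : G.PerfectRecall) (hj : j < G.m i) (hp : p ∈ G.Info i j)
    (β : G.Profile) (a : ℕ) (l : List ℕ) :
    G.prodAlongSkip i j β [] (p ++ a :: l) = G.omega β p * G.prodAlong β (p ++ [a]) l := by
  have hbefore : G.prodAlongSkip i j β [] p = G.omega β p :=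
    prodAlongSkip_eq_prodAlong β fun q c _ hqc => notMem_Info_of_isPrefix hPR hj hp hqc
  have hafter : G.prodAlongSkip i j β (p ++ [a]) l = G.prodAlong β (p ++ [a]) l :=
    prodAlongSkip_eq_prodAlong β fun q _ hq _ hqI => notMem_Info_of_isPrefix hPR hj hqI hq hp
  rw [prodAlongSkip_append, hbefore, List.nil_append, prodAlongSkip, if_pos hp, one_mul, hafter]

theorem nu_of_mem_Info (hPR : G.PerfectRecall) (hj : j < G.m i) (hp : p ∈ G.Info i j)
    (β : G.Profile) (μ : G.Belief) (a : ℕ) (l : List ℕ) :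
    G.nu i j β μ (p ++ a :: l) = μ i j p * G.prodAlong β (p ++ [a]) l := by
  rw [nu, nuAux_append_of_notMem β (μ i j) _ fun q c _ hqc => notMem_Info_of_isPrefix hPR hj hp hqc,
    List.nil_append, nuAux, if_pos hp]

theorem sum_Zset_mem_mul_eq_sum_Info (hPR : G.PerfectRecall) (hj : j < G.m i)
    (ha : a ∈ G.infoA i j) {f w : List ℕ → ℝ}
    (hf : ∀ p ∈ G.Info i j, ∀ l, f (p ++ a :: l) = w p * G.prodAlong β (p ++ [a]) l) :
    ∑ h ∈ G.Zset with a ∈ h, G.u i h * f h =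
      ∑ p ∈ G.Info i j, w p * G.uExpFrom i β (p ++ [a]) := by
  rw [sum_Zset_mem_eq_sum_Info hPR hj ha]
  refine Finset.sum_congr rfl fun p hp => ?_
  rw [uExpFrom, Finset.mul_sum]
  refine Finset.sum_congr rfl fun h hh => ?_
  obtain ⟨l, rfl⟩ := (Finset.mem_filter.1 hh).2
  rw [List.drop_left, List.append_assoc, List.singleton_append, hf p hp, mul_left_comm]

theorem uWedgeAct_eq_sum_Info (hPR : G.PerfectRecall) (hj : j < G.m i) (ha : a ∈ G.infoA i j)
    (β : G.Profile) :
    G.uWedgeAct i j a β = ∑ p ∈ G.Info i j, G.omega β p * G.uExpFrom i β (p ++ [a]) :=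
  sum_Zset_mem_mul_eq_sum_Info hPR hj ha fun _ hp l => prodAlongSkip_of_mem_Info hPR hj hp β a l

theorem uCond_eq_sum_Info (hPR : G.PerfectRecall) (hj : j < G.m i) (ha : a ∈ G.infoA i j)
    (β : G.Profile) (μ : G.Belief) :
    G.uCond i j a β μ = ∑ p ∈ G.Info i j, μ i j p * G.uExpFrom i β (p ++ [a]) :=
  sum_Zset_mem_mul_eq_sum_Info hPR hj ha fun _ hp l => nu_of_mem_Info hPR hj hp β μ a l

theorem moveProb_congr (hm : ∀ k, G.P p = some k → β k (G.infoIdx p) a = γ k (G.infoIdx p) a) :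
    G.moveProb β p a = G.moveProb γ p a := by
  rcases hP : G.P p with _ | k
  · simp only [moveProb, hP, Option.elim_none]
  · rw [moveProb_of_P_eq hP, moveProb_of_P_eq hP, hm k hP]

theorem uExpFrom_congr_of_mem (hoth : ∀ k ≠ i, β k = γ k)
    (hown : ∀ q < G.m i, ∀ h ∈ G.Info i q, a ∈ h → β i q = γ i q) :
    G.uExpFrom i β (p ++ [a]) = G.uExpFrom i γ (p ++ [a]) := by
  refine uExpFrom_congr fun q c hq hqc => moveProb_congr fun k hk => ?_
  rcases eq_or_ne k i with rfl | hki
  · rw [hown _ (infoIdx_lt_of_P_eq hqc hk) q (mem_Info_of_P_eq hqc hk) (hq.subset (by simp))]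
  · rw [hoth k hki]

theorem uCond_congr (hPR : G.PerfectRecall) (hj : j < G.m i) (ha : a ∈ G.infoA i j)
    (hoth : ∀ k ≠ i, β k = γ k) (hown : ∀ q < G.m i, ∀ h ∈ G.Info i q, a ∈ h → β i q = γ i q) :
    G.uCond i j a β μ = G.uCond i j a γ μ := by
  simp only [uCond_eq_sum_Info hPR hj ha, uExpFrom_congr_of_mem hoth hown]

/-! ### Deviations of one player -/

theorem replace_self (β : G.Profile) (i : Fin G.n) : G.replace β i (β i) = β := by
  ext k : 1
  by_cases hk : k = i <;> simp [replace, hk]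

theorem replace_apply_self (β : G.Profile) (i : Fin G.n) (b : ℕ → ℕ → ℝ) :
    G.replace β i b i = b :=
  if_pos rfl

theorem replace_apply_of_ne (β : G.Profile) (b : ℕ → ℕ → ℝ) {k : Fin G.n} (hk : k ≠ i) :
    G.replace β i b k = β k :=
  if_neg hk

theorem IsBehProfile.replace (hβ : G.IsBehProfile β) {b : ℕ → ℕ → ℝ} (hb : G.IsBehStrategy i b) :
    G.IsBehProfile (G.replace β i b) := by
  intro k
  rcases eq_or_ne k i with rfl | hk
  · rwa [replace_apply_self]
  · rw [replace_apply_of_ne β b hk]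
    exact hβ k

theorem moveProb_replace_of_ne (hP : G.P p ≠ some i) (β : G.Profile) (b : ℕ → ℕ → ℝ) (a : ℕ) :
    G.moveProb (G.replace β i b) p a = G.moveProb β p a :=
  moveProb_congr fun _ hk => by
    rw [replace_apply_of_ne β b (by rintro rfl; exact hP hk)]

theorem Sh_replace (β : G.Profile) (i : Fin G.n) (b : ℕ → ℕ → ℝ) (h : List ℕ) :
    G.Sh i (G.replace β i b) h = G.Sh i β h := by
  induction h using List.reverseRecOn with
  | nil => rfl
  | append_singleton p a ih =>
    rw [Sh_append_singleton, Sh_append_singleton, ih]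
    split_ifs with hP
    · rfl
    · rw [moveProb_replace_of_ne hP]

theorem omega_replace_eq_omegaInfo_mul (hPR : G.PerfectRecall) (hμ : G.SelfIndep β μ)
    (hj : j < G.m i) (b : ℕ → ℕ → ℝ) (hh : h ∈ G.Info i j) :
    G.omega (G.replace β i b) h = G.omegaInfo i j (G.replace β i b) * μ i j h :=
  omega_eq_omegaInfo_mul hPR hj
    (fun h hh => by simpa only [SInfo, Sh_replace] using hμ i j hj h hh) hh

theorem sum_A_moveProb_sub_eq_zero (β : G.Profile) (b bt : ℕ → ℕ → ℝ) (f : ℕ → ℝ)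
    (hp : ∀ j < G.m i, p ∉ G.Info i j) :
    ∑ a ∈ G.A p, (G.moveProb (G.replace β i b) p a - G.moveProb (G.replace β i bt) p a) * f a
      = 0 := by
  refine Finset.sum_eq_zero fun a ha => ?_
  by_cases hP : G.P p = some i
  · have hpa := mem_A.1 ha
    exact absurd (mem_Info_of_P_eq hpa hP) (hp _ (infoIdx_lt_of_P_eq hpa hP))
  · rw [moveProb_replace_of_ne hP, moveProb_replace_of_ne hP, sub_self, zero_mul]

theorem uExp_replace_sub_uExp_replace (hPR : G.PerfectRecall) (hμ : G.SelfIndep β μ)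
    (b bt : ℕ → ℕ → ℝ) :
    G.uExp i (G.replace β i b) - G.uExp i (G.replace β i bt) =
      ∑ j ∈ Finset.range (G.m i), G.omegaInfo i j (G.replace β i b) *
        ∑ a ∈ G.infoA i j, (b j a - bt j a) * G.uCond i j a (G.replace β i bt) μ := by
  rw [uExp_sub_uExp, sum_H_eq_sum_Info (i := i) fun p _ hp => by
    rw [sum_A_moveProb_sub_eq_zero β b bt _ hp, mul_zero]]
  refine Finset.sum_congr rfl fun j hj => ?_
  replace hj := Finset.mem_range.1 hj
  have hnode (p : List ℕ) (hp : p ∈ G.Info i j) :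
      ∑ a ∈ G.A p, (G.moveProb (G.replace β i b) p a - G.moveProb (G.replace β i bt) p a) *
        G.uExpFrom i (G.replace β i bt) (p ++ [a]) =
      ∑ a ∈ G.infoA i j, (b j a - bt j a) * G.uExpFrom i (G.replace β i bt) (p ++ [a]) := by
    simp only [A_eq_infoA hj hp, moveProb_of_P_eq (P_of_mem_Info hj hp), replace_apply_self,
      infoIdx_of_mem_Info hj hp]
  calc
    _ = ∑ p ∈ G.Info i j, ∑ a ∈ G.infoA i j, G.omegaInfo i j (G.replace β i b) *
          ((b j a - bt j a) * (μ i j p * G.uExpFrom i (G.replace β i bt) (p ++ [a]))) := by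
      refine Finset.sum_congr rfl fun p hp => ?_
      rw [hnode p hp, omega_replace_eq_omegaInfo_mul hPR hμ hj b hp, Finset.mul_sum]
      exact Finset.sum_congr rfl fun a _ => by ring
    _ = _ := by
      rw [Finset.sum_comm, Finset.mul_sum]
      refine Finset.sum_congr rfl fun a ha => ?_
      rw [uCond_eq_sum_Info hPR hj ha, Finset.mul_sum, Finset.mul_sum]

theorem rho_apply_of_ne (β γ : G.Profile) {k : Fin G.n} (hk : k ≠ i) :
    G.rho i j β γ k = β k :=
  funext fun _ => if_neg fun h => hk h.1

theorem rho_apply_of_mem {b q : ℕ} (hb : b ∈ G.infoA i j) (hh : h ∈ G.Info i q) (hbh : b ∈ h) :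
    G.rho i j β γ i q = γ i q :=
  if_pos ⟨rfl, h, hh, b, hbh, hb⟩

theorem uExpFrom_rho (ha : a ∈ G.infoA i j) :
    G.uExpFrom i (G.rho i j β γ) (p ++ [a]) =
      G.uExpFrom i (G.replace β i (γ i)) (p ++ [a]) :=
  uExpFrom_congr_of_mem
    (fun k hk => by rw [rho_apply_of_ne β γ hk, replace_apply_of_ne β (γ i) hk])
    fun q _ h hh hah => by rw [rho_apply_of_mem ha hh hah, replace_apply_self]

theorem uCond_rho (hPR : G.PerfectRecall) (hj : j < G.m i) (ha : a ∈ G.infoA i j) :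
    G.uCond i j a (G.rho i j β γ) μ = G.uCond i j a (G.replace β i (γ i)) μ := by
  simp only [uCond_eq_sum_Info hPR hj ha, uExpFrom_rho ha]

theorem omega_rho (hPR : G.PerfectRecall) (hj : j < G.m i) (hp : p ∈ G.Info i j) :
    G.omega (G.rho i j β γ) p = G.omega β p := by
  refine prodAlong_congr fun q c _ hqc => moveProb_congr fun k hk => ?_
  have hqcH : q ++ [c] ∈ G.H := mem_H_of_isPrefix (mem_H_of_mem_Info hj hp) hqc
  have hq := mem_Info_of_P_eq hqcH hk
  have hlt := infoIdx_lt_of_P_eq hqcH hk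
  refine congrFun (if_neg ?_) c
  rintro ⟨rfl, h, hh, b, hbh, hb⟩
  exact (infoRank_lt_of_mem hPR hj hlt hb hh hbh).not_gt
    (infoRank_lt_of_isPrefix hPR hlt hj hq hp hqc)

theorem uWedgeAct_rho (hPR : G.PerfectRecall) (hμ : G.SelfIndep β μ) (hj : j < G.m i)
    (ha : a ∈ G.infoA i j) :
    G.uWedgeAct i j a (G.rho i j β γ) =
      G.omegaInfo i j β * G.uCond i j a (G.replace β i (γ i)) μ := by
  rw [uWedgeAct_eq_sum_Info hPR hj ha, uCond_eq_sum_Info hPR hj ha, Finset.mul_sum]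
  refine Finset.sum_congr rfl fun p hp => ?_
  rw [omega_rho hPR hj hp, uExpFrom_rho ha, omega_eq_omegaInfo_mul hPR hj (hμ i j hj) hp,
    mul_assoc]

theorem uCond_replace_congr (hPR : G.PerfectRecall) (hj : j < G.m i) (ha : a ∈ G.infoA i j)
    {b b' : ℕ → ℕ → ℝ} (hbb' : ∀ q < G.m i, G.infoRank i j < G.infoRank i q → b q = b' q) :
    G.uCond i j a (G.replace β i b) μ = G.uCond i j a (G.replace β i b') μ :=
  uCond_congr hPR hj ha
    (fun k hk => by rw [replace_apply_of_ne β b hk, replace_apply_of_ne β b' hk])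
    fun q hq h hh hah => by
      rw [replace_apply_self, replace_apply_self,
        hbb' q hq (infoRank_lt_of_mem hPR hj hq ha hh hah)]

/-! ### Sequentially rational strategies -/

/-- Sequential rationality of the strategy `b` of player `i`, given the beliefs `μ` and that the
other players follow `β`: at every information set, moving according to `b` is optimal among the
actions followed by `b`. -/
def SequentiallyRational (i : Fin G.n) (β : G.Profile) (μ : G.Belief) (b : ℕ → ℕ → ℝ) : Prop :=
  ∀ j < G.m i, MaximizesExpectation (G.infoA i j) (b j) fun a =>
    G.uCond i j a (G.replace β i b) μ

theorem wellFounded_infoRank_gt (i : Fin G.n) :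
    WellFounded fun q j => q < G.m i ∧ G.infoRank i j < G.infoRank i q := by
  let N := (Finset.range (G.m i)).sup (G.infoRank i)
  refine Subrelation.wf (fun {q j} ⟨hq, hjq⟩ => ?_)
    (measure fun j => N - G.infoRank i j).wf
  have hqN : G.infoRank i q ≤ N := Finset.le_sup (Finset.mem_range.2 hq)
  exact Nat.sub_lt_sub_left (hjq.trans_le hqN) hjq

theorem exists_sequentiallyRational (hPR : G.PerfectRecall) (i : Fin G.n) (β : G.Profile)
    (μ : G.Belief) : ∃ b, G.IsBehStrategy i b ∧ G.SequentiallyRational i β μ b := by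
  let Q (j : ℕ) (b : ℕ → ℕ → ℝ) (x : ℕ → ℝ) : Prop := j < G.m i →
    (∀ a ∈ G.infoA i j, 0 ≤ x a) ∧ ∑ a ∈ G.infoA i j, x a = 1 ∧
      MaximizesExpectation (G.infoA i j) x fun a => G.uCond i j a (G.replace β i b) μ
  have hlocal (j : ℕ) (b b' : ℕ → ℕ → ℝ)
      (hbb' : ∀ q, q < G.m i ∧ G.infoRank i j < G.infoRank i q → b q = b' q) (x : ℕ → ℝ)
      (hx : Q j b x) : Q j b' x := fun hj =>
    ⟨(hx hj).1, (hx hj).2.1, (maximizesExpectation_congr fun a ha =>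
      uCond_replace_congr hPR hj ha fun q hq hjq => hbb' q ⟨hq, hjq⟩).1 (hx hj).2.2⟩
  have hexists (j : ℕ) (b : ℕ → ℕ → ℝ) : ∃ x, Q j b x := by
    by_cases hj : j < G.m i
    · obtain ⟨x, hx⟩ := exists_distribution_maximizesExpectation (infoA_nonempty hj) fun a =>
        G.uCond i j a (G.replace β i b) μ
      exact ⟨x, fun _ => hx⟩
    · exact ⟨0, fun h => absurd h hj⟩
  obtain ⟨b, hb⟩ :=
    exists_forall_apply_of_wellFounded (wellFounded_infoRank_gt i) hlocal hexists
  exact ⟨b, fun j hj => ⟨(hb j hj).1, (hb j hj).2.1⟩, fun j hj => (hb j hj).2.2⟩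

theorem SequentiallyRational.omegaInfo_mul_sum_nonpos {b bt : ℕ → ℕ → ℝ}
    (hbt : G.SequentiallyRational i β μ bt) (hβ : G.IsBehProfile β) (hb : G.IsBehStrategy i b)
    (hj : j < G.m i) :
    G.omegaInfo i j (G.replace β i b) *
      ∑ a ∈ G.infoA i j, (b j a - bt j a) * G.uCond i j a (G.replace β i bt) μ ≤ 0 := by
  refine mul_nonpos_of_nonneg_of_nonpos (omegaInfo_nonneg (hβ.replace hb) hj) ?_
  simp only [sub_mul, Finset.sum_sub_distrib, sub_nonpos]
  exact sum_mul_le_of_forall_le (hb j hj).1 (hb j hj).2 (hbt j hj)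

theorem SequentiallyRational.uExp_replace_le {b bt : ℕ → ℕ → ℝ}
    (hbt : G.SequentiallyRational i β μ bt) (hPR : G.PerfectRecall) (hβ : G.IsBehProfile β)
    (hμ : G.SelfIndep β μ) (hb : G.IsBehStrategy i b) :
    G.uExp i (G.replace β i b) ≤ G.uExp i (G.replace β i bt) := by
  rw [← sub_nonpos, uExp_replace_sub_uExp_replace hPR hμ]
  exact Finset.sum_nonpos fun j hj =>
    hbt.omegaInfo_mul_sum_nonpos hβ hb (Finset.mem_range.1 hj)

theorem SequentiallyRational.uExp_le_iff {bt : ℕ → ℕ → ℝ}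
    (hbt : G.SequentiallyRational i β μ bt) (hPR : G.PerfectRecall) (hβ : G.IsBehProfile β)
    (hμ : G.SelfIndep β μ) (hbt' : G.IsBehStrategy i bt) :
    G.uExp i (G.replace β i bt) ≤ G.uExp i β ↔
      ∀ j < G.m i, MaximizesExpectation (G.infoA i j) (β i j) fun a =>
        G.omegaInfo i j β * G.uCond i j a (G.replace β i bt) μ := by
  have hdiff := uExp_replace_sub_uExp_replace (i := i) hPR hμ (β i) bt
  have hnonpos (j : ℕ) (hj : j ∈ Finset.range (G.m i)) :=
    hbt.omegaInfo_mul_sum_nonpos hβ (hβ i) (Finset.mem_range.1 hj)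
  rw [replace_self] at hdiff hnonpos
  rw [← sub_nonneg, hdiff, (Finset.sum_nonpos hnonpos).ge_iff_eq,
    Finset.sum_eq_zero_iff_of_nonpos hnonpos]
  refine forall_congr' fun j => ?_
  rw [Finset.mem_range]
  refine forall_congr' fun hj => ?_
  rw [← (hbt j hj).mul_sum_sub_nonneg_iff (hbt' j hj).1 (hbt' j hj).2 (omegaInfo_nonneg hβ hj),
    (hnonpos j (Finset.mem_range.2 hj)).ge_iff_eq]

theorem isNash_iff_of_sequentiallyRational {βt : G.Profile} (hPR : G.PerfectRecall)
    (hβ : G.IsBehProfile β) (hμ : G.SelfIndep β μ) (hβt : G.IsBehProfile βt)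
    (hrat : ∀ i, G.SequentiallyRational i β μ (βt i)) :
    G.IsNash β ↔ ∀ (i : Fin G.n) (j : ℕ), j < G.m i →
      MaximizesExpectation (G.infoA i j) (β i j) fun a => G.uWedgeAct i j a (G.rho i j β βt) := by
  have hbest : G.IsNash β ↔ ∀ i, G.uExp i (G.replace β i (βt i)) ≤ G.uExp i β :=
    ⟨fun hNash i => hNash.2 i _ (hβt i), fun h =>
      ⟨hβ, fun i b hb => ((hrat i).uExp_replace_le hPR hβ hμ hb).trans (h i)⟩⟩
  rw [hbest]
  refine forall_congr' fun i => ((hrat i).uExp_le_iff hPR hβ hμ (hβt i)).trans ?_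
  exact forall₂_congr fun j hj =>
    maximizesExpectation_congr fun a ha => (uWedgeAct_rho hPR hμ hj ha).symm

theorem sequentiallyRational_iff {βt : G.Profile} (hPR : G.PerfectRecall) :
    G.SequentiallyRational i β μ (βt i) ↔ ∀ j < G.m i,
      MaximizesExpectation (G.infoA i j) (βt i j) fun a => G.uCond i j a (G.rho i j β βt) μ :=
  forall₂_congr fun _ hj => maximizesExpectation_congr fun _ ha => (uCond_rho hPR hj ha).symm

theorem isNash_iff_exists_maximizesExpectation (hPR : G.PerfectRecall) (hβ : G.IsBehProfile β) :
    G.IsNash β ↔ ∃ (βt : G.Profile) (μ : G.Belief),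
      G.IsBehProfile βt ∧ G.IsBelief μ ∧ G.SelfIndep β μ ∧ ∀ (i : Fin G.n) (j : ℕ), j < G.m i →
        (MaximizesExpectation (G.infoA i j) (β i j) fun a =>
          G.uWedgeAct i j a (G.rho i j β βt)) ∧
        MaximizesExpectation (G.infoA i j) (βt i j) fun a =>
          G.uCond i j a (G.rho i j β βt) μ := by
  refine ⟨fun hNash => ?_, fun ⟨βt, μ, hβt, _, hμ, hmax⟩ => ?_⟩
  · obtain ⟨μ, hbel, hμ⟩ := exists_isBelief_selfIndep hβ
    choose βt hβt hrat using fun i => exists_sequentiallyRational hPR i β μ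
    exact ⟨βt, μ, hβt, hbel, hμ, fun i j hj =>
      ⟨(isNash_iff_of_sequentiallyRational hPR hβ hμ hβt hrat).1 hNash i j hj,
        (sequentiallyRational_iff hPR).1 (hrat i) j hj⟩⟩
  · have hrat (i : Fin G.n) : G.SequentiallyRational i β μ (βt i) :=
      (sequentiallyRational_iff hPR).2 fun j hj => (hmax i j hj).2
    exact (isNash_iff_of_sequentiallyRational hPR hβ hμ hβt hrat).2 fun i j hj => (hmax i j hj).1

end EFG

/-- Theorem 3: `β*` is a Nash equilibrium in behavioral strategies iff the polynomial
system (12) is solvable. -/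
theorem stmt6 (G : EFG) (hPR : G.PerfectRecall) (β : G.Profile) (hβ : G.IsBehProfile β) :
    G.IsNash β ↔
      ∃ (βt : G.Profile) (μ : G.Belief) (lam lamt : Fin G.n → ℕ → ℕ → ℝ)
        (ze zet : Fin G.n → ℕ → ℝ),
        (∀ (i : Fin G.n) (j : ℕ), j < G.m i → ∀ a ∈ G.infoA i j,
          G.uWedgeAct i j a (G.rho i j β βt) + lam i j a - ze i j = 0) ∧
        (∀ (i : Fin G.n) (j : ℕ), j < G.m i → ∀ a ∈ G.infoA i j,
          G.uCond i j a (G.rho i j β βt) μ + lamt i j a - zet i j = 0) ∧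
        (∀ (i : Fin G.n) (j : ℕ), j < G.m i → ∀ h ∈ G.Info i j,
          G.SInfo i j β * μ i j h = G.Sh i β h ∧ 0 ≤ μ i j h) ∧
        (∀ (i : Fin G.n) (j : ℕ), j < G.m i →
          (∑ h ∈ G.Info i j, μ i j h = 1) ∧ (∑ a ∈ G.infoA i j, β i j a = 1) ∧
          (∑ a ∈ G.infoA i j, βt i j a = 1)) ∧
        (∀ (i : Fin G.n) (j : ℕ), j < G.m i → ∀ a ∈ G.infoA i j,
          β i j a * lam i j a = 0 ∧ βt i j a * lamt i j a = 0 ∧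
          0 ≤ β i j a ∧ 0 ≤ lam i j a ∧ 0 ≤ βt i j a ∧ 0 ≤ lamt i j a) := by
  rw [EFG.isNash_iff_exists_maximizesExpectation hPR hβ]
  constructor
  · rintro ⟨βt, μ, hβt, hbel, hμ, hmax⟩
    let ze (i : Fin G.n) (j : ℕ) :=
      ∑ c ∈ G.infoA i j, β i j c * G.uWedgeAct i j c (G.rho i j β βt)
    let zet (i : Fin G.n) (j : ℕ) :=
      ∑ c ∈ G.infoA i j, βt i j c * G.uCond i j c (G.rho i j β βt) μ
    refine ⟨βt, μ, fun i j a => ze i j - G.uWedgeAct i j a (G.rho i j β βt),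
      fun i j a => zet i j - G.uCond i j a (G.rho i j β βt) μ, ze, zet,
      fun i j _ a _ => by ring, fun i j _ a _ => by ring,
      fun i j hj h hh => ⟨hμ i j hj h hh, (hbel i j hj).1 h hh⟩,
      fun i j hj => ⟨(hbel i j hj).2, (hβ i j hj).2, (hβt i j hj).2⟩, fun i j hj a ha => ?_⟩
    obtain ⟨hβ₀, hβ₁⟩ := hβ i j hj
    obtain ⟨hβt₀, hβt₁⟩ := hβt i j hj
    obtain ⟨hw, hv⟩ := hmax i j hj
    exact ⟨hw.mul_sub_eq_zero hβ₀ hβ₁ ha, hv.mul_sub_eq_zero hβt₀ hβt₁ ha, hβ₀ a ha,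
      sub_nonneg.2 (hw a ha), hβt₀ a ha, sub_nonneg.2 (hv a ha)⟩
  · rintro ⟨βt, μ, lam, lamt, ze, zet, hw, hv, hμ, hsum, hcompl⟩
    choose hβl hβtl _ hl hβt hlt using hcompl
    choose hμ₁ hβ₁ hβt₁ using hsum
    exact ⟨βt, μ, fun i j hj => ⟨hβt i j hj, hβt₁ i j hj⟩,
      fun i j hj => ⟨fun h hh => (hμ i j hj h hh).2, hμ₁ i j hj⟩,
      fun i j hj h hh => (hμ i j hj h hh).1, fun i j hj =>
        ⟨maximizesExpectation_of_multipliers (hβ₁ i j hj) (hw i j hj) (hl i j hj) (hβl i j hj),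
          maximizesExpectation_of_multipliers (hβt₁ i j hj) (hv i j hj) (hlt i j hj)
            (hβtl i j hj)⟩⟩
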